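/- Let U be a connected open subset of ℂ with 0 ∈ U and U ≠ ℂ. If U is holomorphically simply connected, then there exists a holomorphic bijection H from U onto the open unit disc D = {z ∈ ℂ : |z| < 1} with holomorphic inverse and with H(0) = 0. -/

import Mathlib

/-- An open set `U ⊆ ℂ` is *holomorphically simply connected* if every
holomorphic function on `U` has a holomorphic antiderivative on `U`. -/
def HolSC (U : Set ℂ) : Prop :=
  ∀ f : ℂ → ℂ, DifferentiableOn ℂ f U →
    ∃ F : ℂ → ℂ, DifferentiableOn ℂ F U ∧ ∀ z ∈ U, HasDerivAt F (f z) z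

/-!
Among the injective holomorphic maps `f : U → 𝔻` with `f p = 0`, one that maximizes `‖f' p‖` is
onto. The family is nonempty because a square root of `z - a`, for `a ∉ U`, omits a disc.
Montel's theorem yields a locally uniform limit of a maximizing sequence, and by Hurwitz's theorem
this limit, not being constant, is still injective. If `f` misses the value `w`, composing `f`
with the disc automorphism that sends `w` to `0`, then taking a branch `h` of the square root, and
finally applying the automorphism that sends `h p` to `0`, multiplies `‖f' p‖` by
`(1 + t ^ 2) / (2 * t) > 1`, where `t = ‖h p‖`.
-/

open Set Filter Metric Topology

section Montel

theorem equicontinuousAt_of_norm_le {ι E F : Type*} [NormedAddCommGroup E]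
    [NormedSpace ℂ E] [NormedAddCommGroup F] [NormedSpace ℂ F] {f : ι → E → F} {x : E} {r M : ℝ}
    (hr : 0 < r) (hd : ∀ i, DifferentiableOn ℂ (f i) (ball x r))
    (hb : ∀ i, ∀ z ∈ ball x r, ‖f i z‖ ≤ M) : EquicontinuousAt f x := by
  refine Metric.equicontinuousAt_of_continuity_modulus (fun z ↦ (M + M) / r * dist z x)
    ((by fun_prop : Continuous _).tendsto' _ _ (by simp)) f ?_
  filter_upwards [ball_mem_nhds x hr] with z hz i
  rw [dist_comm]
  refine Complex.dist_le_div_mul_dist_of_mapsTo_ball (hd i) (fun y hy ↦ ?_) hz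
  exact mem_closedBall.2 <| (dist_le_norm_add_norm _ _).trans <|
    add_le_add (hb i y hy) (hb i x (mem_ball_self hr))

theorem tendstoLocallyUniformlyOn_of_equicontinuousOn {ι X α : Type*} [TopologicalSpace X]
    [LocallyCompactSpace X] [UniformSpace α] {U : Set X} (hU : IsOpen U) {F : ι → X → α}
    {f : X → α} {φ : Filter ι} (hF : EquicontinuousOn F U)
    (hlim : ∀ x ∈ U, Tendsto (fun i ↦ F i x) φ (𝓝 (f x))) :
    TendstoLocallyUniformlyOn F f φ U := by
  let 𝔖 : Set (Set X) := {K | K ⊆ U ∧ IsCompact K}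
  have hpointwise : Tendsto ((⋃₀ 𝔖).domRestrict ∘ F) φ (𝓝 ((⋃₀ 𝔖).domRestrict f)) :=
    tendsto_pi_nhds.2 fun ⟨x, K, hK, hxK⟩ ↦ hlim x (hK.1 hxK)
  have hcompact := UniformOnFun.tendsto_iff_tendstoUniformlyOn.1 <|
    (EquicontinuousOn.tendsto_uniformOnFun_iff_pi' (𝔖 := 𝔖) (fun _ hK ↦ hK.2)
      (fun _ hK ↦ hF.mono hK.1) φ f).2 hpointwise
  exact (tendstoLocallyUniformlyOn_iff_forall_isCompact hU).2
    fun K hKU hK ↦ hcompact K ⟨hKU, hK⟩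

/-- **Montel's theorem**, along ultrafilters so that no subsequence has to be extracted. -/
theorem exists_tendstoLocallyUniformlyOn_of_locally_bounded {ι E F : Type*}
    [NormedAddCommGroup E] [NormedSpace ℂ E] [LocallyCompactSpace E] [NormedAddCommGroup F]
    [NormedSpace ℂ F] [ProperSpace F] {U : Set E} (hU : IsOpen U) {f : ι → E → F}
    (φ : Ultrafilter ι) (hd : ∀ i, DifferentiableOn ℂ (f i) U)
    (hb : ∀ x ∈ U, ∃ M, ∀ᶠ z in 𝓝 x, ∀ i, ‖f i z‖ ≤ M) :
    ∃ g : E → F, TendstoLocallyUniformlyOn f g φ U := by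
  have hlim : ∀ x, ∃ w, x ∈ U → Tendsto (fun i ↦ f i x) φ (𝓝 w) := by
    intro x
    by_cases hx : x ∈ U
    · obtain ⟨M, hM⟩ := hb x hx
      have hmem : ∀ i, f i x ∈ closedBall 0 M :=
        fun i ↦ mem_closedBall_zero_iff.2 (hM.self_of_nhds i)
      obtain ⟨w, -, hw⟩ := (isCompact_closedBall (0 : F) M).ultrafilter_le_nhds
        (φ.map fun i ↦ f i x) (le_principal_iff.2 <| mem_map.2 <| univ_mem' hmem)
      exact ⟨w, fun _ ↦ hw⟩
    · exact ⟨0, fun h ↦ absurd h hx⟩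
  choose g hg using hlim
  refine ⟨g, tendstoLocallyUniformlyOn_of_equicontinuousOn hU (fun x hx ↦ ?_) hg⟩
  obtain ⟨M, hM⟩ := hb x hx
  obtain ⟨r, hr, hball⟩ := Metric.mem_nhds_iff.1 (inter_mem (hU.mem_nhds hx) hM)
  exact (equicontinuousAt_of_norm_le hr (fun i ↦ (hd i).mono fun z hz ↦ (hball hz).1)
    fun i z hz ↦ (hball hz).2 i).equicontinuousWithinAt U

end Montel

section Hurwitz

theorem le_norm_of_forall_mem_frontier_le_norm {E : Type*} [NormedAddCommGroup E]
    [NormedSpace ℂ E] [Nontrivial E] {V : Set E} {f : E → ℂ} {m : ℝ} (hV : Bornology.IsBounded V)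
    (hd : DiffContOnCl ℂ f V) (hne : ∀ z ∈ closure V, f z ≠ 0)
    (hm : ∀ z ∈ frontier V, m ≤ ‖f z‖) {z : E} (hz : z ∈ closure V) : m ≤ ‖f z‖ := by
  rcases le_or_gt m 0 with hm₀ | hm₀
  · exact hm₀.trans (norm_nonneg _)
  have hinv : ‖(f⁻¹) z‖ ≤ m⁻¹ :=
    Complex.norm_le_of_forall_mem_frontier_norm_le hV (hd.inv hne)
      (fun w hw ↦ by simpa using inv_anti₀ hm₀ (hm w hw)) hz
  rw [Pi.inv_apply, norm_inv] at hinv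
  exact (inv_le_inv₀ (norm_pos_iff.2 (hne z hz)) hm₀).1 hinv

variable {ι : Type*} {φ : Filter ι} [φ.NeBot] {U : Set ℂ} {F : ι → ℂ → ℂ} {f : ℂ → ℂ}

/-- **Hurwitz's theorem**, local form. -/
theorem eventually_eq_zero_of_tendstoLocallyUniformlyOn (hU : IsOpen U)
    (hlim : TendstoLocallyUniformlyOn F f φ U) (hd : ∀ᶠ n in φ, DifferentiableOn ℂ (F n) U)
    (hne : ∀ᶠ n in φ, ∀ z ∈ U, F n z ≠ 0) {a : ℂ} (ha : a ∈ U) (hfa : f a = 0) :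
    ∀ᶠ z in 𝓝 a, f z = 0 := by
  have hfd : DifferentiableOn ℂ f U := hlim.differentiableOn hd hU
  refine (hfd.analyticAt (hU.mem_nhds ha)).eventually_eq_zero_or_eventually_ne_zero.resolve_right
    fun hisolated ↦ ?_
  obtain ⟨r, hr, hball⟩ := nhds_basis_closedBall.mem_iff.1
    (inter_mem (hU.mem_nhds ha) (eventually_nhdsWithin_iff.1 hisolated))
  have hballU : closedBall a r ⊆ U := fun z hz ↦ (hball hz).1
  obtain ⟨w, hw, hmin⟩ := (isCompact_sphere a r).exists_isMinOn
    (NormedSpace.sphere_nonempty.2 hr.le)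
    (hfd.continuousOn.mono (sphere_subset_closedBall.trans hballU)).norm
  have hfw : 0 < ‖f w‖ :=
    norm_pos_iff.2 ((hball (sphere_subset_closedBall hw)).2 (ne_of_mem_sphere hw hr.ne'))
  have hunif : TendstoUniformlyOn F f φ (closedBall a r) :=
    (tendstoLocallyUniformlyOn_iff_forall_isCompact hU).1 hlim _ hballU (isCompact_closedBall a r)
  obtain ⟨n, hclose, hFd, hFne⟩ :=
    ((Metric.tendstoUniformlyOn_iff.1 hunif _ (half_pos hfw)).and (hd.and hne)).exists
  have hcenter : ‖F n a‖ < ‖f w‖ / 2 := by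
    simpa [hfa] using hclose a (mem_closedBall_self hr.le)
  refine hcenter.not_ge (le_norm_of_forall_mem_frontier_le_norm isBounded_ball
    (hFd.diffContOnCl_ball hballU) ?_ ?_ (subset_closure (mem_ball_self hr)))
  · exact fun z hz ↦ hFne z (hballU (closure_ball_subset_closedBall hz))
  · intro z hz
    rw [frontier_ball a hr.ne'] at hz
    have hfz : ‖f w‖ ≤ ‖f z‖ := hmin hz
    have hFz := hclose z (sphere_subset_closedBall hz)
    rw [dist_eq_norm] at hFz
    linarith [norm_sub_norm_le (f z) (F n z)]

theorem injOn_or_exists_eqOn_const_of_tendstoLocallyUniformlyOn (hU : IsOpen U)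
    (hUc : IsPreconnected U) (hlim : TendstoLocallyUniformlyOn F f φ U)
    (hd : ∀ᶠ n in φ, DifferentiableOn ℂ (F n) U) (hinj : ∀ᶠ n in φ, InjOn (F n) U) :
    InjOn f U ∨ ∃ c, EqOn f (fun _ ↦ c) U := by
  refine or_iff_not_imp_left.2 fun hf ↦ ?_
  obtain ⟨a, ha, b, hb, hab, hne⟩ : ∃ a ∈ U, ∃ b ∈ U, f a = f b ∧ a ≠ b := by
    simpa [InjOn] using hf
  have hlim' : TendstoLocallyUniformlyOn (fun n z ↦ F n z - F n b) (fun z ↦ f z - f b) φ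
      (U \ {b}) :=
    (hlim.mono sdiff_subset).sub
      ((hlim.tendsto_at hb).tendstoUniformlyOn_const _).tendstoLocallyUniformlyOn
  have hev : ∀ᶠ z in 𝓝 a, f z - f b = 0 := by
    refine eventually_eq_zero_of_tendstoLocallyUniformlyOn (hU.sdiff isClosed_singleton) hlim'
      (hd.mono fun n hn ↦ (hn.mono sdiff_subset).sub_const _) ?_ ⟨ha, hne⟩ (sub_eq_zero.2 hab)
    filter_upwards [hinj] with n hn z hz h₀ using hz.2 (hn hz.1 hb (sub_eq_zero.1 h₀))
  exact ⟨f b, ((hlim.differentiableOn hd hU).analyticOnNhd hU).eqOn_of_preconnected_of_eventuallyEq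
    analyticOnNhd_const hUc ha (hev.mono fun _ ↦ sub_eq_zero.1)⟩

end Hurwitz

section InjectiveHolomorphic

theorem tendstoLocallyUniformlyOn_difference_quotient {𝕜 E : Type*} [NontriviallyNormedField 𝕜]
    [NormedAddCommGroup E] [NormedSpace 𝕜 E] {f f' : 𝕜 → E} {U : Set 𝕜}
    (hf : ∀ z ∈ U, HasStrictDerivAt f (f' z) z) (hf' : ContinuousOn f' U) :
    TendstoLocallyUniformlyOn (fun h z ↦ h⁻¹ • (f (z + h) - f z)) f' (𝓝[≠] 0) U := by
  refine tendstoLocallyUniformlyOn_iff_forall_tendsto.2 fun x hx ↦ ?_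
  have hpair : Tendsto (fun y : 𝕜 × 𝕜 ↦ (y.2 + y.1, y.2)) (𝓝[≠] 0 ×ˢ 𝓝[U] x) (𝓝 (x, x)) := by
    have : Continuous fun y : 𝕜 × 𝕜 ↦ (y.2 + y.1, y.2) := by fun_prop
    refine (this.tendsto' (0, x) (x, x) (by simp)).mono_left ?_
    rw [nhds_prod_eq]
    exact prod_mono nhdsWithin_le_nhds nhdsWithin_le_nhds
  have hquot : Tendsto (fun y : 𝕜 × 𝕜 ↦ y.1⁻¹ • (f (y.2 + y.1) - f y.2))
      (𝓝[≠] 0 ×ˢ 𝓝[U] x) (𝓝 (f' x)) := by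
    have hrem : Tendsto (fun y : 𝕜 × 𝕜 ↦ y.1⁻¹ • (f (y.2 + y.1) - f y.2 - y.1 • f' x))
        (𝓝[≠] 0 ×ˢ 𝓝[U] x) (𝓝 0) := by
      refine Asymptotics.IsLittleO.tendsto_inv_smul_nhds_zero ?_
      simpa [Function.comp_def] using (hf x hx).isLittleO.comp_tendsto hpair
    have hne : ∀ᶠ y : 𝕜 × 𝕜 in 𝓝[≠] 0 ×ˢ 𝓝[U] x, y.1 ≠ 0 :=
      tendsto_fst.eventually self_mem_nhdsWithin
    refine (by simpa using hrem.add_const (f' x) : Tendsto _ _ (𝓝 (f' x))).congr' ?_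
    filter_upwards [hne] with y hy
    rw [smul_sub, inv_smul_smul₀ hy, sub_add_cancel]
  exact ((hf' x hx).tendsto.comp tendsto_snd).prodMk_nhds hquot |>.mono_right
    (nhds_le_uniformity _)

variable {U : Set ℂ} {f : ℂ → ℂ}

/-- The difference quotients of an injective function have no zeros, so Hurwitz's theorem applies
to their limit, the derivative. -/
theorem deriv_ne_zero_of_injOn (hU : IsOpen U) (hd : DifferentiableOn ℂ f U) (hinj : InjOn f U)
    {a : ℂ} (ha : a ∈ U) : deriv f a ≠ 0 := by
  intro hfa
  obtain ⟨r, hr, hrU⟩ := Metric.isOpen_iff.1 hU a ha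
  have hballU : ball a (r / 2) ⊆ U := (ball_subset_ball (half_le_self hr.le)).trans hrU
  have hshift : ∀ᶠ h : ℂ in 𝓝[≠] 0, ∀ z ∈ ball a (r / 2), z + h ∈ U := by
    filter_upwards [nhdsWithin_le_nhds (ball_mem_nhds 0 (half_pos hr))] with h hh z hz
    refine hrU (mem_ball.2 ?_)
    have := dist_triangle (z + h) z a
    rw [dist_self_add_left] at this
    linarith [mem_ball.1 hz, mem_ball_zero_iff.1 hh]
  have hev : ∀ᶠ z in 𝓝 a, deriv f z = 0 := by
    refine eventually_eq_zero_of_tendstoLocallyUniformlyOn isOpen_ball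
      (tendstoLocallyUniformlyOn_difference_quotient
        (fun z hz ↦ (hd.analyticAt (hU.mem_nhds (hballU hz))).hasStrictDerivAt)
        ((hd.deriv hU).continuousOn.mono hballU)) ?_ ?_ (mem_ball_self (half_pos hr)) hfa
    · filter_upwards [hshift] with h hh
      exact ((hd.comp (by fun_prop) hh).sub (hd.mono hballU)).const_smul h⁻¹
    · filter_upwards [hshift, self_mem_nhdsWithin] with h hh hh₀ z hz
      refine smul_ne_zero (inv_ne_zero hh₀) (sub_ne_zero.2 fun heq ↦ hh₀ ?_)
      simpa using hinj (hh z hz) (hballU hz) heq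
  obtain ⟨ρ, hρ, hball⟩ := Metric.mem_nhds_iff.1 (inter_mem (hU.mem_nhds ha) hev)
  obtain ⟨z, hz, hza⟩ := (infinite_of_mem_nhds a (ball_mem_nhds a hρ)).nontrivial.exists_ne a
  have haρ := mem_ball_self (x := a) hρ
  exact hza <| hinj (hball hz).1 ha <|
    isOpen_ball.is_const_of_deriv_eq_zero (convex_ball a ρ).isPreconnected
      (hd.mono fun y hy ↦ (hball hy).1) (fun y hy ↦ (hball hy).2) hz haρ

theorem image_mem_nhds_of_injOn (hU : IsOpen U) (hd : DifferentiableOn ℂ f U) (hinj : InjOn f U)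
    {a : ℂ} (ha : a ∈ U) : f '' U ∈ 𝓝 (f a) := by
  rw [← (hd.analyticAt (hU.mem_nhds ha)).hasStrictDerivAt.map_nhds_eq
    (deriv_ne_zero_of_injOn hU hd hinj ha)]
  exact image_mem_map (hU.mem_nhds ha)

theorem differentiableOn_image_of_leftInvOn (hU : IsOpen U) (hd : DifferentiableOn ℂ f U)
    {g : ℂ → ℂ} (hg : LeftInvOn g f U) : DifferentiableOn ℂ g (f '' U) := by
  rintro _ ⟨z, hz, rfl⟩
  exact ((hd.analyticAt (hU.mem_nhds hz)).hasStrictDerivAt.to_local_left_inverse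
    (deriv_ne_zero_of_injOn hU hd hg.injOn hz) (mem_of_superset (hU.mem_nhds hz) hg)
    ).hasDerivAt.differentiableAt.differentiableWithinAt

end InjectiveHolomorphic


section SquareRoot

/-- Holomorphic square roots exist on `U`: every nowhere vanishing holomorphic function on `U` is
the square of one. It is through this property that simple connectedness enters the proof of the
Riemann mapping theorem. -/
def HasHolomorphicSqrt (U : Set ℂ) : Prop :=
  ∀ g : ℂ → ℂ, DifferentiableOn ℂ g U → (∀ z ∈ U, g z ≠ 0) →
    ∃ h : ℂ → ℂ, DifferentiableOn ℂ h U ∧ ∀ z ∈ U, h z ^ 2 = g z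

variable {U : Set ℂ}

theorem HolSC.exists_exp_eq (hU : HolSC U) (hUo : IsOpen U) (hUc : IsPreconnected U) {g : ℂ → ℂ}
    (hg : DifferentiableOn ℂ g U) (hg₀ : ∀ z ∈ U, g z ≠ 0) :
    ∃ L : ℂ → ℂ, DifferentiableOn ℂ L U ∧ ∀ z ∈ U, Complex.exp (L z) = g z := by
  obtain ⟨L, hLd, hL⟩ := hU (logDeriv g) ((hg.deriv hUo).div hg hg₀)
  have hderiv : ∀ z ∈ U, HasDerivAt (fun z ↦ g z * Complex.exp (-L z)) 0 z := by
    intro z hz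
    refine ((hg.hasDerivAt (hUo.mem_nhds hz)).mul (hL z hz).neg.cexp).congr_deriv ?_
    have := hg₀ z hz
    rw [logDeriv_apply]
    field_simp
    ring
  obtain ⟨c, hc⟩ := hUo.exists_is_const_of_deriv_eq_zero hUc
    (fun z hz ↦ (hderiv z hz).differentiableAt.differentiableWithinAt)
    fun z hz ↦ (hderiv z hz).deriv
  refine ⟨fun z ↦ L z + Complex.log c, hLd.add_const _, fun z hz ↦ ?_⟩
  have hc₀ : c ≠ 0 := hc z hz ▸ mul_ne_zero (hg₀ z hz) (Complex.exp_ne_zero _)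
  rw [Complex.exp_add, Complex.exp_log hc₀, ← hc z hz, mul_left_comm, ← Complex.exp_add,
    add_neg_cancel, Complex.exp_zero, mul_one]

theorem HolSC.hasHolomorphicSqrt (hU : HolSC U) (hUo : IsOpen U) (hUc : IsPreconnected U) :
    HasHolomorphicSqrt U := by
  intro g hg hg₀
  obtain ⟨L, hLd, hL⟩ := hU.exists_exp_eq hUo hUc hg hg₀
  refine ⟨fun z ↦ Complex.exp (L z / 2), (hLd.div_const 2).cexp, fun z hz ↦ ?_⟩
  rw [← Complex.exp_nat_mul, ← hL z hz, Nat.cast_ofNat, mul_div_cancel₀ _ two_ne_zero]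

end SquareRoot

section DiscEmbedding

/-- A conformal embedding of `U` into the unit disc: an injective holomorphic map `U → 𝔻`.
Only the values of `f` on `U` matter. -/
structure IsDiscEmbedding (U : Set ℂ) (f : ℂ → ℂ) : Prop where
  differentiableOn : DifferentiableOn ℂ f U
  mapsTo : MapsTo f U (ball 0 1)
  injOn : InjOn f U

variable {U : Set ℂ} {f : ℂ → ℂ}

theorem IsDiscEmbedding.norm_lt_one (hf : IsDiscEmbedding U f) {z : ℂ} (hz : z ∈ U) :
    ‖f z‖ < 1 :=
  mem_ball_zero_iff.1 (hf.mapsTo hz)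

theorem IsDiscEmbedding.comp {g : ℂ → ℂ} (hg : IsDiscEmbedding (ball 0 1) g)
    (hf : IsDiscEmbedding U f) : IsDiscEmbedding U (g ∘ f) where
  differentiableOn := hg.differentiableOn.comp hf.differentiableOn hf.mapsTo
  mapsTo := hg.mapsTo.comp hf.mapsTo
  injOn := hg.injOn.comp hf.injOn hf.mapsTo

theorem IsDiscEmbedding.of_sq_eq {h : ℂ → ℂ} (hf : IsDiscEmbedding U f)
    (hd : DifferentiableOn ℂ h U) (hsq : ∀ z ∈ U, h z ^ 2 = f z) : IsDiscEmbedding U h where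
  differentiableOn := hd
  mapsTo z hz := by
    have hlt : ‖h z‖ ^ 2 < 1 := by simpa only [← hsq z hz, norm_pow] using hf.norm_lt_one hz
    exact mem_ball_zero_iff.2 ((pow_lt_one_iff_of_nonneg (norm_nonneg _) two_ne_zero).1 hlt)
  injOn z hz w hw hzw := hf.injOn hz hw (by rw [← hsq z hz, ← hsq w hw, hzw])

theorem exists_isDiscEmbedding_of_forall_le_dist (hd : DifferentiableOn ℂ f U) (hinj : InjOn f U)
    {c : ℂ} {ε : ℝ} (hε : 0 < ε) (hfar : ∀ z ∈ U, ε ≤ dist (f z) c) :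
    ∃ g, IsDiscEmbedding U g := by
  have hne : ∀ z ∈ U, f z - c ≠ 0 := fun z hz ↦
    sub_ne_zero.2 (dist_pos.1 (hε.trans_le (hfar z hz)))
  have hε₀ : ((ε / 2 : ℝ) : ℂ) ≠ 0 := Complex.ofReal_ne_zero.2 (half_pos hε).ne'
  refine ⟨fun z ↦ (ε / 2 : ℝ) / (f z - c), (differentiableOn_const _).div (hd.sub_const c) hne,
    fun z hz ↦ ?_, fun z hz w hw hzw ↦ hinj hz hw ?_⟩
  · rw [mem_ball_zero_iff, norm_div, Complex.norm_of_nonneg (half_pos hε).le, ← dist_eq_norm,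
      div_lt_one (hε.trans_le (hfar z hz))]
    exact (half_lt_self hε).trans_le (hfar z hz)
  · simp only [div_eq_mul_inv] at hzw
    exact sub_left_injective (inv_injective (mul_left_cancel₀ hε₀ hzw))

/-- If `h ^ 2 = id - a`, then `h '' U` is open and disjoint from `-(h '' U)`, so that it stays away
from `-h p`. -/
theorem HasHolomorphicSqrt.exists_isDiscEmbedding (hU : HasHolomorphicSqrt U) (hUo : IsOpen U)
    (hUne : U ≠ univ) : ∃ f, IsDiscEmbedding U f := by
  obtain ⟨a, ha⟩ := (ne_univ_iff_exists_notMem U).1 hUne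
  rcases U.eq_empty_or_nonempty with rfl | ⟨p, hp⟩
  · exact ⟨id, differentiableOn_empty, mapsTo_empty _ _, injOn_empty _⟩
  have hne : ∀ z ∈ U, z - a ≠ 0 := fun z hz ↦ sub_ne_zero.2 (ne_of_mem_of_not_mem hz ha)
  obtain ⟨h, hd, hsq⟩ := hU (fun z ↦ z - a) (by fun_prop) hne
  have hinj : InjOn h U := fun z hz w hw hzw ↦
    sub_left_injective (show z - a = w - a by rw [← hsq z hz, ← hsq w hw, hzw])
  have hdisjoint : ∀ z ∈ U, ∀ w ∈ U, h w ≠ -h z := by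
    intro z hz w hw hwz
    have hsq_eq : w - a = z - a := by rw [← hsq w hw, ← hsq z hz, hwz, neg_sq]
    obtain rfl := sub_left_injective hsq_eq
    refine hne w hw ?_
    rw [← hsq w hw, self_eq_neg.1 hwz, zero_pow two_ne_zero]
  obtain ⟨ε, hε, hball⟩ := Metric.mem_nhds_iff.1 (image_mem_nhds_of_injOn hUo hd hinj hp)
  refine exists_isDiscEmbedding_of_forall_le_dist hd hinj (c := -h p) hε fun z hz ↦ ?_
  by_contra! hlt
  obtain ⟨w, hw, hwz⟩ : -h z ∈ h '' U := by
    refine hball (mem_ball.2 ?_)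
    rwa [← dist_neg_neg, neg_neg]
  exact hdisjoint z hz w hw hwz

end DiscEmbedding

section Blaschke

open ComplexConjugate

/-- The Blaschke factor `z ↦ (z - a) / (1 - conj a * z)`, which for `‖a‖ < 1` is the automorphism of
the unit disc that sends `a` to `0`. -/
noncomputable def blaschkeFactor (a z : ℂ) : ℂ := (z - a) / (1 - conj a * z)

theorem blaschkeFactor_self (a : ℂ) : blaschkeFactor a a = 0 := by simp [blaschkeFactor]

theorem blaschkeFactor_zero (a : ℂ) : blaschkeFactor a 0 = -a := by simp [blaschkeFactor]

theorem one_sub_conj_mul_ne_zero {a z : ℂ} (ha : ‖a‖ < 1) (hz : ‖z‖ < 1) :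
    1 - conj a * z ≠ 0 := by
  refine sub_ne_zero.2 fun h ↦ ?_
  have hlt : ‖conj a * z‖ < 1 := by
    rw [norm_mul, RCLike.norm_conj]
    exact mul_lt_one_of_nonneg_of_lt_one_left (norm_nonneg a) ha hz.le
  rw [← h, norm_one] at hlt
  exact hlt.false

theorem sq_norm_one_sub_conj_mul_sub_sq_norm_sub (a z : ℂ) :
    ‖1 - conj a * z‖ ^ 2 - ‖z - a‖ ^ 2 = (1 - ‖a‖ ^ 2) * (1 - ‖z‖ ^ 2) := by
  simp only [Complex.sq_norm, Complex.normSq_apply, Complex.sub_re, Complex.sub_im,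
    Complex.mul_re, Complex.mul_im, Complex.conj_re, Complex.conj_im, Complex.one_re,
    Complex.one_im]
  ring

theorem norm_blaschkeFactor_lt_one {a z : ℂ} (ha : ‖a‖ < 1) (hz : ‖z‖ < 1) :
    ‖blaschkeFactor a z‖ < 1 := by
  rw [blaschkeFactor, norm_div, div_lt_one (norm_pos_iff.2 (one_sub_conj_mul_ne_zero ha hz))]
  refine lt_of_pow_lt_pow_left₀ 2 (norm_nonneg _) (sub_pos.1 ?_)
  rw [sq_norm_one_sub_conj_mul_sub_sq_norm_sub]
  exact mul_pos (sub_pos.2 (pow_lt_one₀ (norm_nonneg a) ha two_ne_zero))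
    (sub_pos.2 (pow_lt_one₀ (norm_nonneg z) hz two_ne_zero))

theorem hasDerivAt_blaschkeFactor {a z : ℂ} (h : 1 - conj a * z ≠ 0) :
    HasDerivAt (blaschkeFactor a) ((1 - conj a * a) / (1 - conj a * z) ^ 2) z := by
  refine (((hasDerivAt_id z).sub_const a).div
    (((hasDerivAt_id z).const_mul (conj a)).const_sub 1) h).congr_deriv ?_
  simp only [id]
  ring

theorem hasDerivAt_blaschkeFactor_zero (a : ℂ) :
    HasDerivAt (blaschkeFactor a) (1 - (‖a‖ : ℂ) ^ 2) 0 := by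
  simpa [Complex.conj_mul'] using hasDerivAt_blaschkeFactor (a := a) (z := 0) (by simp)

theorem hasDerivAt_blaschkeFactor_self {a : ℂ} (ha : ‖a‖ < 1) :
    HasDerivAt (blaschkeFactor a) (1 - (‖a‖ : ℂ) ^ 2)⁻¹ a := by
  have hne := one_sub_conj_mul_ne_zero ha ha
  refine (hasDerivAt_blaschkeFactor hne).congr_deriv ?_
  rw [sq (1 - conj a * a), div_mul_cancel_left₀ hne, Complex.conj_mul']

theorem isDiscEmbedding_blaschkeFactor {a : ℂ} (ha : ‖a‖ < 1) :
    IsDiscEmbedding (ball 0 1) (blaschkeFactor a) where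
  differentiableOn z hz := (hasDerivAt_blaschkeFactor (one_sub_conj_mul_ne_zero ha
    (mem_ball_zero_iff.1 hz))).differentiableAt.differentiableWithinAt
  mapsTo z hz := mem_ball_zero_iff.2 (norm_blaschkeFactor_lt_one ha (mem_ball_zero_iff.1 hz))
  injOn z hz w hw h := by
    rw [mem_ball_zero_iff] at hz hw
    rw [blaschkeFactor, blaschkeFactor, div_eq_div_iff (one_sub_conj_mul_ne_zero ha hz)
      (one_sub_conj_mul_ne_zero ha hw)] at h
    refine mul_left_cancel₀ (one_sub_conj_mul_ne_zero ha ha) ?_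
    linear_combination h

end Blaschke

section Koebe

variable {U : Set ℂ} {f : ℂ → ℂ} {p : ℂ}

theorem deriv_blaschkeFactor_comp_of_sq_eventuallyEq {h : ℂ → ℂ} {w : ℂ}
    (hf : DifferentiableAt ℂ f p) (hfp : f p = 0) (hw : ‖w‖ < 1) (hw₀ : w ≠ 0)
    (hh : DifferentiableAt ℂ h p) (hsq : h ^ 2 =ᶠ[𝓝 p] blaschkeFactor w ∘ f) :
    deriv (blaschkeFactor (h p) ∘ h) p = (1 + (‖h p‖ : ℂ) ^ 2) / (2 * h p) * deriv f p := by
  have hnorm : ‖h p‖ ^ 2 = ‖w‖ := by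
    have := hsq.self_of_nhds
    rw [Pi.pow_apply, Function.comp_apply, hfp, blaschkeFactor_zero] at this
    rw [← norm_pow, this, norm_neg]
  have hhp : ‖h p‖ < 1 :=
    (pow_lt_one_iff_of_nonneg (norm_nonneg _) two_ne_zero).1 (hnorm.trans_lt hw)
  have hhp₀ : h p ≠ 0 := by
    intro h₀
    rw [h₀, norm_zero, zero_pow two_ne_zero] at hnorm
    exact hw₀ (norm_eq_zero.1 hnorm.symm)
  have hsqrt : 2 * h p * deriv h p = (1 - (‖h p‖ : ℂ) ^ 4) * deriv f p := by
    have hcomp : HasDerivAt (blaschkeFactor w ∘ f) ((1 - (‖w‖ : ℂ) ^ 2) * deriv f p) p :=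
      HasDerivAt.comp p (hfp ▸ hasDerivAt_blaschkeFactor_zero w) hf.hasDerivAt
    have := (hh.hasDerivAt.pow 2).unique (hcomp.congr_of_eventuallyEq hsq)
    rw [← hnorm] at this
    push_cast at this
    linear_combination this
  have hself : HasDerivAt (blaschkeFactor (h p) ∘ h) ((1 - (‖h p‖ : ℂ) ^ 2)⁻¹ * deriv h p) p :=
    (hasDerivAt_blaschkeFactor_self hhp).comp p hh.hasDerivAt
  have hden : 1 - (‖h p‖ : ℂ) ^ 2 ≠ 0 := by
    exact_mod_cast (sub_pos.2 (hnorm.trans_lt hw)).ne'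
  rw [hself.deriv]
  field_simp
  linear_combination hsqrt

theorem one_lt_norm_one_add_sq_norm_div {b : ℂ} (hb₀ : b ≠ 0) (hb : ‖b‖ < 1) :
    1 < ‖(1 + (‖b‖ : ℂ) ^ 2) / (2 * b)‖ := by
  have hnum : ‖1 + (‖b‖ : ℂ) ^ 2‖ = 1 + ‖b‖ ^ 2 := by
    exact_mod_cast Complex.norm_of_nonneg (by positivity : 0 ≤ 1 + ‖b‖ ^ 2)
  rw [norm_div, norm_mul, Complex.norm_two, hnum, one_lt_div (by positivity)]
  nlinarith [sq_pos_of_pos (sub_pos.2 hb)]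

theorem HasHolomorphicSqrt.exists_norm_deriv_lt (hU : HasHolomorphicSqrt U) (hUo : IsOpen U)
    (hp : p ∈ U) (hf : IsDiscEmbedding U f) (hfp : f p = 0) {w : ℂ} (hw : ‖w‖ < 1)
    (hwf : w ∉ f '' U) : ∃ k, IsDiscEmbedding U k ∧ k p = 0 ∧ ‖deriv f p‖ < ‖deriv k p‖ := by
  have hw₀ : w ≠ 0 := by
    rintro rfl
    exact hwf ⟨p, hp, hfp⟩
  have hg : IsDiscEmbedding U (blaschkeFactor w ∘ f) := (isDiscEmbedding_blaschkeFactor hw).comp hf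
  have hg₀ : ∀ z ∈ U, (blaschkeFactor w ∘ f) z ≠ 0 := fun z hz h₀ ↦ by
    have hzw : f z = w := (isDiscEmbedding_blaschkeFactor hw).injOn (hf.mapsTo hz)
      (mem_ball_zero_iff.2 hw) (h₀.trans (blaschkeFactor_self w).symm)
    exact hwf ⟨z, hz, hzw⟩
  obtain ⟨h, hd, hsq⟩ := hU _ hg.differentiableOn hg₀
  have hh : IsDiscEmbedding U h := hg.of_sq_eq hd hsq
  have hhp₀ : h p ≠ 0 := fun h₀ ↦ hg₀ p hp (by rw [← hsq p hp, h₀, zero_pow two_ne_zero])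
  have hUp : U ∈ 𝓝 p := hUo.mem_nhds hp
  refine ⟨blaschkeFactor (h p) ∘ h, (isDiscEmbedding_blaschkeFactor (hh.norm_lt_one hp)).comp hh,
    blaschkeFactor_self (h p), ?_⟩
  rw [deriv_blaschkeFactor_comp_of_sq_eventuallyEq (hf.differentiableOn.differentiableAt hUp) hfp
    hw hw₀ (hd.differentiableAt hUp) (eventually_of_mem hUp hsq), norm_mul]
  exact lt_mul_of_one_lt_left
    (norm_pos_iff.2 (deriv_ne_zero_of_injOn hUo hf.differentiableOn hf.injOn hp))
    (one_lt_norm_one_add_sq_norm_div hhp₀ (hh.norm_lt_one hp))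

end Koebe

section Extremal

/-- The conformal embeddings of `U` into the unit disc that send `p` to `0`: the family over which
`‖deriv f p‖` is maximized. -/
def pointedDiscEmbeddings (U : Set ℂ) (p : ℂ) : Set (ℂ → ℂ) := {f | IsDiscEmbedding U f ∧ f p = 0}

variable {U : Set ℂ} {p : ℂ}

theorem HasHolomorphicSqrt.pointedDiscEmbeddings_nonempty (hU : HasHolomorphicSqrt U)
    (hUo : IsOpen U) (hUne : U ≠ univ) (hp : p ∈ U) : (pointedDiscEmbeddings U p).Nonempty := by
  obtain ⟨f, hf⟩ := hU.exists_isDiscEmbedding hUo hUne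
  exact ⟨blaschkeFactor (f p) ∘ f, (isDiscEmbedding_blaschkeFactor (hf.norm_lt_one hp)).comp hf,
    blaschkeFactor_self (f p)⟩

theorem bddAbove_norm_deriv_pointedDiscEmbeddings (hU : U ∈ 𝓝 p) :
    BddAbove ((fun f ↦ ‖deriv f p‖) '' pointedDiscEmbeddings U p) := by
  obtain ⟨r, hr, hball⟩ := Metric.mem_nhds_iff.1 hU
  refine ⟨1 / r, ?_⟩
  rintro _ ⟨f, ⟨hf, hfp⟩, rfl⟩
  refine Complex.norm_deriv_le_div_of_mapsTo_ball (hf.differentiableOn.mono hball) ?_ hr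
  rw [hfp]
  exact (hf.mapsTo.mono_left hball).mono_right ball_subset_closedBall

theorem mem_pointedDiscEmbeddings_of_tendstoLocallyUniformlyOn {ι : Type*} {φ : Filter ι}
    [φ.NeBot] {F : ι → ℂ → ℂ} {f : ℂ → ℂ} (hU : IsOpen U) (hUc : IsPreconnected U) (hp : p ∈ U)
    (hF : ∀ᶠ n in φ, F n ∈ pointedDiscEmbeddings U p) (hlim : TendstoLocallyUniformlyOn F f φ U)
    (hne : deriv f p ≠ 0) : f ∈ pointedDiscEmbeddings U p := by
  have hFd : ∀ᶠ n in φ, DifferentiableOn ℂ (F n) U := hF.mono fun n hn ↦ hn.1.differentiableOn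
  have hd : DifferentiableOn ℂ f U := hlim.differentiableOn hFd hU
  have hnotconst : ¬∃ c, EqOn f (fun _ ↦ c) U := by
    rintro ⟨c, hc⟩
    refine hne ?_
    rw [(hc.eventuallyEq_of_mem (hU.mem_nhds hp)).deriv_eq, deriv_const]
  have hfp : f p = 0 := tendsto_nhds_unique (hlim.tendsto_at hp)
    (tendsto_const_nhds.congr' (hF.mono fun n hn ↦ hn.2.symm))
  have hle : ∀ z ∈ U, ‖f z‖ ≤ 1 := fun z hz ↦
    le_of_tendsto (hlim.tendsto_at hz).norm (hF.mono fun n hn ↦ (hn.1.norm_lt_one hz).le)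
  have hlt : ∀ z ∈ U, ‖f z‖ < 1 := by
    refine fun z hz ↦ (hle z hz).lt_of_ne fun hz₁ ↦ ?_
    have hmax : IsMaxOn (norm ∘ f) U z := fun y hy ↦ (hle y hy).trans_eq hz₁.symm
    have hconst := Complex.norm_eqOn_of_isPreconnected_of_isMaxOn hUc hU hd hz hmax hp
    simp [hfp, hz₁] at hconst
  exact ⟨⟨hd, fun z hz ↦ mem_ball_zero_iff.2 (hlt z hz),
    (injOn_or_exists_eqOn_const_of_tendstoLocallyUniformlyOn hU hUc hlim hFd
      (hF.mono fun n hn ↦ hn.1.injOn)).resolve_right hnotconst⟩, hfp⟩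

theorem exists_isMaxOn_norm_deriv_pointedDiscEmbeddings (hU : IsOpen U) (hUc : IsPreconnected U)
    (hp : p ∈ U) (hne : (pointedDiscEmbeddings U p).Nonempty) :
    ∃ f ∈ pointedDiscEmbeddings U p,
      IsMaxOn (fun f ↦ ‖deriv f p‖) (pointedDiscEmbeddings U p) f := by
  have hbdd := bddAbove_norm_deriv_pointedDiscEmbeddings (hU.mem_nhds hp)
  obtain ⟨u, -, hu, hmem⟩ := exists_seq_tendsto_sSup (hne.image fun f ↦ ‖deriv f p‖) hbdd
  choose F hF hFu using hmem
  obtain ⟨f, hlim⟩ := exists_tendstoLocallyUniformlyOn_of_locally_bounded hU (hyperfilter ℕ)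
    (fun n ↦ (hF n).1.differentiableOn) fun x hx ↦ ⟨1, eventually_of_mem (hU.mem_nhds hx)
      fun z hz n ↦ ((hF n).1.norm_lt_one hz).le⟩
  have hsup : ‖deriv f p‖ = sSup ((fun f ↦ ‖deriv f p‖) '' pointedDiscEmbeddings U p) := by
    have hderiv := (hlim.deriv (.of_forall fun n ↦ (hF n).1.differentiableOn) hU).tendsto_at hp
    refine tendsto_nhds_unique hderiv.norm ((hu.mono_left Nat.hyperfilter_le_atTop).congr ?_)
    exact fun n ↦ (hFu n).symm
  have hmax : ∀ k ∈ pointedDiscEmbeddings U p, ‖deriv k p‖ ≤ ‖deriv f p‖ :=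
    fun k hk ↦ hsup ▸ le_csSup hbdd (mem_image_of_mem _ hk)
  obtain ⟨k, hk⟩ := hne
  have hfp : 0 < ‖deriv f p‖ := (norm_pos_iff.2
    (deriv_ne_zero_of_injOn hU hk.1.differentiableOn hk.1.injOn hp)).trans_le (hmax k hk)
  exact ⟨f, mem_pointedDiscEmbeddings_of_tendstoLocallyUniformlyOn hU hUc hp (.of_forall hF) hlim
    (norm_pos_iff.1 hfp), hmax⟩

end Extremal

theorem riemann_mapping_normalized_general {U : Set ℂ} (hUo : IsOpen U) (hUc : IsPreconnected U)
    {p : ℂ} (hp : p ∈ U) (hUne : U ≠ univ) (hU : HasHolomorphicSqrt U) :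
    ∃ H G : ℂ → ℂ,
      DifferentiableOn ℂ H U ∧
      DifferentiableOn ℂ G (ball 0 1) ∧
      MapsTo H U (ball 0 1) ∧
      MapsTo G (ball 0 1) U ∧
      (∀ z ∈ U, G (H z) = z) ∧
      (∀ w ∈ ball 0 1, H (G w) = w) ∧
      H p = 0 := by
  obtain ⟨f, ⟨hf, hfp⟩, hmax⟩ := exists_isMaxOn_norm_deriv_pointedDiscEmbeddings hUo hUc hp
    (hU.pointedDiscEmbeddings_nonempty hUo hUne hp)
  have hsurj : SurjOn f U (ball 0 1) := by
    intro w hw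
    by_contra hwf
    obtain ⟨k, hk, hkp, hlt⟩ := hU.exists_norm_deriv_lt hUo hp hf hfp (mem_ball_zero_iff.1 hw) hwf
    exact hlt.not_ge (hmax ⟨hk, hkp⟩)
  have hinv : InvOn (Function.invFunOn f U) f U (ball 0 1) :=
    (BijOn.mk hf.mapsTo hf.injOn hsurj).invOn_invFunOn
  exact ⟨f, Function.invFunOn f U, hf.differentiableOn,
    (differentiableOn_image_of_leftInvOn hUo hf.differentiableOn hinv.1).mono hsurj,
    hf.mapsTo, hsurj.mapsTo_invFunOn, hinv.1, hinv.2, hfp⟩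

/-- **Riemann Mapping Theorem, normalized form.** A connected open proper subset
of `ℂ` containing `0` that is holomorphically simply connected admits a
biholomorphism onto the open unit disc taking `0` to `0`. -/
theorem riemann_mapping_normalized (U : Set ℂ) (hUopen : IsOpen U)
    (hUconn : IsConnected U) (h0 : (0 : ℂ) ∈ U) (hUne : U ≠ Set.univ)
    (hU : HolSC U) :
    ∃ H G : ℂ → ℂ,
      DifferentiableOn ℂ H U ∧
      DifferentiableOn ℂ G (Metric.ball (0 : ℂ) 1) ∧
      Set.MapsTo H U (Metric.ball (0 : ℂ) 1) ∧
      Set.MapsTo G (Metric.ball (0 : ℂ) 1) U ∧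
      (∀ z ∈ U, G (H z) = z) ∧
      (∀ w ∈ Metric.ball (0 : ℂ) 1, H (G w) = w) ∧
      H 0 = 0 :=
  riemann_mapping_normalized_general hUopen hUconn.isPreconnected h0 hUne
    (hU.hasHolomorphicSqrt hUopen hUconn.isPreconnected)
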